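/- Brascamp–Lieb exponential moment inequality: There exists a constant C > 0 depending only on a_V and A_V such that for every finite connected graph G = (V ∪ ∂V, E) with distinguished nonempty set ∂V, every boundary condition ψ : ∂V → ℝ, and every ν ∈ ℝ^V, E_{P^ψ}[exp(⟨ν, h⟩ − E_{P^ψ}⟨ν, h⟩)] ≤ E[exp(C ⟨ν, h*⟩)], where ⟨ν, h⟩ = Σ_{x∈V} ν(x) h(x), h is distributed according to the GL measure P^ψ, and h* is distributed according to the zero-boundary discrete Gaussian free field on G with unit weights. -/

import Mathlib

/-!
The Prékopa–Leindler inequality holds on every finite-dimensional space: on the line it is the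
Brunn–Minkowski inequality for superlevel sets, and it passes to products and linear images.

Let `H - Q / 2` be convex for a quadratic form `Q ≥ 0`, let `P ∝ exp (-H)`, and let `X = Q(u, ·)`.
For `a + b = 1` the functions `exp (X - H)` and `exp (-(a / b) X - H)` have weighted geometric mean
at most `exp ((a / b) Q(u, u) / 2 - H)` at the convex combination, so Prékopa–Leindler gives
`E[exp X] ^ a * E[exp (-(a / b) X)] ^ b ≤ exp ((a / b) Q(u, u) / 2)`. Jensen bounds the second
factor below by `exp (-a E[X])`; taking `a`-th roots and letting `b → 1` yields
`E[exp (X - E[X])] ≤ exp (Q(u, u) / 2)`, with equality for the Gaussian `H = Q / 2`.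

The GL energy is convex relative to `a_V` times the Dirichlet form, so comparing the two bounds
gives the constant `C = a_V ^ (-1/2)`. Every functional `⟨ν, ·⟩` has the form `D(u, ·)`, because
the Dirichlet form `D` is nondegenerate: `exp (-D / 2)` is integrable, hence has no period.
-/

open MeasureTheory ProbabilityTheory Real
open scoped ENNReal NNReal Classical

noncomputable section

/-- `h ∨ ψ`: the field `h` on the interior `V = (∂V)ᶜ` extended by `ψ` on the boundary `∂V = B`. -/
def gvee {α : Type*} [DecidableEq α] (B : Finset α) (h : {x // x ∉ B} → ℝ) (ψ : α → ℝ) :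
    α → ℝ :=
  fun x => if hx : x ∉ B then h ⟨x, hx⟩ else ψ x

/-- GL Hamiltonian `∑_{b ∈ E} V(∇(h∨ψ)(b))` on a graph (each undirected edge counted once,
which for even `V` agrees with half the sum over ordered adjacent pairs). -/
def graphGLEnergy {α : Type*} [Fintype α] [DecidableEq α] (V : ℝ → ℝ)
    (G : SimpleGraph α) [DecidableRel G.Adj] (B : Finset α) (ψ : α → ℝ)
    (h : {x // x ∉ B} → ℝ) : ℝ :=
  (1 / 2) * ∑ x : α, ∑ y : α, if G.Adj x y then V (gvee B h ψ y - gvee B h ψ x) else 0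

/-- `P` is the GL measure on the graph `G` with boundary set `B`, potential `V` and boundary
condition `ψ`: a probability measure proportional to `exp(−H) dh` on `ℝ^V`. -/
def IsGraphGL {α : Type*} [Fintype α] [DecidableEq α] (V : ℝ → ℝ)
    (G : SimpleGraph α) [DecidableRel G.Adj] (B : Finset α) (ψ : α → ℝ)
    (P : Measure ({x // x ∉ B} → ℝ)) : Prop :=
  IsProbabilityMeasure P ∧ ∃ c : ℝ≥0∞, c ≠ 0 ∧ c ≠ ⊤ ∧
    P = c • (volume.withDensity fun h => ENNReal.ofReal (Real.exp (-(graphGLEnergy V G B ψ h))))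

/-- DGFF Hamiltonian `(1/2) ∑_{b ∈ E} ω(b) (∇(h∨φ)(b))²` on a weighted graph. -/
def graphDGFFEnergy {α : Type*} [Fintype α] [DecidableEq α]
    (G : SimpleGraph α) [DecidableRel G.Adj] (B : Finset α) (w : α → α → ℝ) (φ : α → ℝ)
    (h : {x // x ∉ B} → ℝ) : ℝ :=
  (1 / 4) * ∑ x : α, ∑ y : α,
    if G.Adj x y then w x y * (gvee B h φ y - gvee B h φ x) ^ 2 else 0

/-- `P` is the discrete Gaussian free field on the weighted graph `(G, w)` with boundary set `B`
and boundary condition `φ`. -/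
def IsGraphDGFF {α : Type*} [Fintype α] [DecidableEq α]
    (G : SimpleGraph α) [DecidableRel G.Adj] (B : Finset α) (w : α → α → ℝ) (φ : α → ℝ)
    (P : Measure ({x // x ∉ B} → ℝ)) : Prop :=
  IsProbabilityMeasure P ∧ ∃ c : ℝ≥0∞, c ≠ 0 ∧ c ≠ ⊤ ∧
    P = c • (volume.withDensity fun h =>
      ENNReal.ofReal (Real.exp (-(graphDGFFEnergy G B w φ h))))

open scoped Pointwise Topology

section BrunnMinkowskiReal

variable {A B K L : Set ℝ}

theorem volume_add_volume_le_volume_add_of_isCompact (hK : IsCompact K) (hL : IsCompact L)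
    (hK₀ : K.Nonempty) (hL₀ : L.Nonempty) : volume K + volume L ≤ volume (K + L) := by
  obtain ⟨p, hpK, hp⟩ := hK.exists_isGreatest hK₀
  obtain ⟨q, hqL, hq⟩ := hL.exists_isLeast hL₀
  -- `K + q` and `p + L` lie in `K + L` and meet at most in `p + q`.
  have hnull : volume ((K + {q}) ∩ ({p} + L)) = 0 := by
    refine measure_mono_null (t := {p + q}) ?_ (by simp)
    rintro _ ⟨⟨x, hx, _, rfl, rfl⟩, ⟨_, rfl, y, hy, hxy⟩⟩
    have hxp := hp hx
    have hqy := hq hy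
    simp only [Set.mem_singleton_iff] at hxy ⊢
    linarith
  calc volume K + volume L = volume (K + {q}) + volume ({p} + L) := by
        simp only [Set.add_singleton, Set.singleton_add, Set.image_add_right, Set.image_add_left,
          measure_preimage_add_right, measure_preimage_add]
    _ = volume ((K + {q}) ∪ ({p} + L)) :=
        (measure_union₀ (isCompact_singleton.add hL).measurableSet.nullMeasurableSet hnull).symm
    _ ≤ volume (K + L) := by
        gcongr
        exact Set.union_subset (Set.add_subset_add_left (Set.singleton_subset_iff.mpr hqL))
          (Set.add_subset_add_right (Set.singleton_subset_iff.mpr hpK))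

theorem volume_add_volume_le_volume_add (hA : MeasurableSet A) (hB : MeasurableSet B)
    (hA₀ : A.Nonempty) (hB₀ : B.Nonempty) : volume A + volume B ≤ volume (A + B) := by
  obtain ⟨p, hp⟩ := hA₀
  obtain ⟨q, hq⟩ := hB₀
  rw [hA.measure_eq_iSup_isCompact, hB.measure_eq_iSup_isCompact]
  simp only [iSup_and']
  refine ENNReal.biSup_add_biSup_le' (p := fun K => K ⊆ A ∧ IsCompact K)
    (q := fun L => L ⊆ B ∧ IsCompact L) ⟨∅, by simp⟩ ⟨∅, by simp⟩ ?_
  rintro K ⟨hKA, hK⟩ L ⟨hLB, hL⟩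
  calc volume K + volume L ≤ volume (insert p K) + volume (insert q L) := by
        gcongr <;> exact Set.subset_insert _ _
    _ ≤ volume (insert p K + insert q L) :=
        volume_add_volume_le_volume_add_of_isCompact (hK.insert p) (hL.insert q)
          (Set.insert_nonempty p K) (Set.insert_nonempty q L)
    _ ≤ volume (A + B) := by
        gcongr <;> exact Set.insert_subset ‹_› ‹_›

end BrunnMinkowskiReal

/-- A measure on a real vector space is *Prékopa–Leindler* if it satisfies the Prékopa–Leindler
inequality for all pairs of weights. The functions take values in `ℝ≥0∞`, so that marginals of
admissible functions on a product are again admissible. -/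
def IsPrekopaLeindler {E : Type*} [AddCommGroup E] [Module ℝ E] [MeasurableSpace E]
    (μ : Measure E) : Prop :=
  ∀ ⦃a b : ℝ⦄, 0 < a → 0 < b → a + b = 1 → ∀ ⦃f g k : E → ℝ≥0∞⦄,
    Measurable f → Measurable g → Measurable k →
    (∀ x y, f x ^ a * g y ^ b ≤ k (a • x + b • y)) →
    (∫⁻ x, f x ∂μ) ^ a * (∫⁻ x, g x ∂μ) ^ b ≤ ∫⁻ x, k x ∂μ

theorem lintegral_min_one_eq_lintegral_Ioo_measure_lt {Ω : Type*} [MeasurableSpace Ω]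
    (μ : Measure Ω) {f : Ω → ℝ≥0∞} (hf : Measurable f) :
    ∫⁻ ω, min (f ω) 1 ∂μ = ∫⁻ t in Set.Ioo (0 : ℝ) 1, μ {ω | ENNReal.ofReal t < f ω} := by
  have hfin : ∀ ω, min (f ω) 1 ≠ ∞ := fun ω => ne_top_of_le_ne_top (by simp) (min_le_right _ 1)
  have hlt : ∀ (t : ℝ) (ω : Ω), 0 < t →
      (t < (min (f ω) 1).toReal ↔ t < 1 ∧ ENNReal.ofReal t < f ω) := by
    intro t ω ht
    rw [← ENNReal.ofReal_lt_iff_lt_toReal ht.le (hfin ω), lt_min_iff, ENNReal.ofReal_lt_one,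
      and_comm]
  calc ∫⁻ ω, min (f ω) 1 ∂μ = ∫⁻ ω, ENNReal.ofReal (min (f ω) 1).toReal ∂μ := by
        simp only [ENNReal.ofReal_toReal (hfin _)]
    _ = ∫⁻ t in Set.Ioi (0 : ℝ), μ {ω | t < (min (f ω) 1).toReal} :=
        lintegral_eq_lintegral_meas_lt μ (.of_forall fun _ => ENNReal.toReal_nonneg)
          (by fun_prop)
    _ = ∫⁻ t in Set.Ioi (0 : ℝ),
          (Set.Iio 1).indicator (fun t => μ {ω | ENNReal.ofReal t < f ω}) t := by
        refine setLIntegral_congr_fun measurableSet_Ioi fun t ht => ?_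
        by_cases ht1 : t < 1 <;> simp [hlt t _ ht, ht1]
    _ = ∫⁻ t in Set.Ioo (0 : ℝ) 1, μ {ω | ENNReal.ofReal t < f ω} := by
        rw [setLIntegral_indicator measurableSet_Iio, Set.inter_comm, Set.Ioi_inter_Iio]

section PrekopaLeindlerReal

variable {a b : ℝ} {f g k : ℝ → ℝ≥0∞}

theorem ennreal_geom_mean_le_arith_mean2_weighted (ha : 0 < a) (hb : 0 < b) (hab : a + b = 1)
    (p q : ℝ≥0∞) : p ^ a * q ^ b ≤ ENNReal.ofReal a * p + ENNReal.ofReal b * q := by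
  rcases eq_or_ne p ∞ with rfl | hp
  · simp [ENNReal.mul_top, ha]
  rcases eq_or_ne q ∞ with rfl | hq
  · simp [ENNReal.mul_top, hb]
  lift p to ℝ≥0 using hp
  lift q to ℝ≥0 using hq
  lift a to ℝ≥0 using ha.le
  lift b to ℝ≥0 using hb.le
  rw [← ENNReal.coe_rpow_of_nonneg _ ha.le, ← ENNReal.coe_rpow_of_nonneg _ hb.le,
    ENNReal.ofReal_coe_nnreal, ENNReal.ofReal_coe_nnreal]
  exact_mod_cast NNReal.geom_mean_le_arith_mean2_weighted a b p q (by exact_mod_cast hab)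

theorem volume_superlevel_add_le (ha : 0 < a) (hb : 0 < b) (hab : a + b = 1)
    (hf : Measurable f) (hg : Measurable g)
    (h : ∀ x y, f x ^ a * g y ^ b ≤ k (a • x + b • y)) {s : ℝ≥0∞}
    (hfs : ∃ x, s < f x) (hgs : ∃ x, s < g x) :
    ENNReal.ofReal a * volume {x | s < f x} + ENNReal.ofReal b * volume {x | s < g x}
      ≤ volume {x | s < k x} := by
  have hscale : ∀ {c : ℝ}, 0 < c → ∀ A : Set ℝ,
      volume (c • A) = ENNReal.ofReal c * volume A := fun hc A => by
    simp [Measure.addHaar_smul, abs_of_pos hc]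
  have hfA : MeasurableSet {x | s < f x} := measurableSet_lt measurable_const hf
  have hgB : MeasurableSet {x | s < g x} := measurableSet_lt measurable_const hg
  rw [← hscale ha, ← hscale hb]
  refine (volume_add_volume_le_volume_add (hfA.const_smul₀ a) (hgB.const_smul₀ b)
    (Set.Nonempty.smul_set hfs) (Set.Nonempty.smul_set hgs)).trans (measure_mono ?_)
  rintro _ ⟨_, ⟨x, hx, rfl⟩, _, ⟨y, hy, rfl⟩, rfl⟩
  calc s = s ^ a * s ^ b := by
        rw [← ENNReal.rpow_add_of_nonneg _ _ ha.le hb.le, hab, ENNReal.rpow_one]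
    _ < f x ^ a * g y ^ b :=
        ENNReal.mul_lt_mul (ENNReal.rpow_lt_rpow hx ha) (ENNReal.rpow_lt_rpow hy hb)
    _ ≤ k (a • x + b • y) := h x y

theorem lintegral_add_lintegral_le_of_iSup_eq_one (ha : 0 < a) (hb : 0 < b) (hab : a + b = 1)
    (hf : Measurable f) (hg : Measurable g) (hk : Measurable k)
    (h : ∀ x y, f x ^ a * g y ^ b ≤ k (a • x + b • y))
    (hf₁ : ⨆ x, f x = 1) (hg₁ : ⨆ x, g x = 1) :
    ENNReal.ofReal a * (∫⁻ x, f x) + ENNReal.ofReal b * (∫⁻ x, g x) ≤ ∫⁻ x, k x := by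
  have layer : ∀ {u : ℝ → ℝ≥0∞}, Measurable u → ⨆ x, u x = 1 →
      ∫⁻ x, u x = ∫⁻ t in Set.Ioo (0 : ℝ) 1, volume {x | ENNReal.ofReal t < u x} := by
    intro u hu hu₁
    rw [← lintegral_min_one_eq_lintegral_Ioo_measure_lt volume hu]
    exact lintegral_congr fun x => (min_eq_left (hu₁ ▸ le_iSup u x)).symm
  have hne : ∀ {u : ℝ → ℝ≥0∞}, ⨆ x, u x = 1 → ∀ t < (1 : ℝ), ∃ x, ENNReal.ofReal t < u x :=
    fun hu₁ t ht => lt_iSup_iff.mp (by rwa [hu₁, ENNReal.ofReal_lt_one])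
  calc ENNReal.ofReal a * (∫⁻ x, f x) + ENNReal.ofReal b * (∫⁻ x, g x)
      ≤ ∫⁻ t in Set.Ioo (0 : ℝ) 1, (ENNReal.ofReal a * volume {x | ENNReal.ofReal t < f x} +
          ENNReal.ofReal b * volume {x | ENNReal.ofReal t < g x}) := by
        rw [layer hf hf₁, layer hg hg₁, ← lintegral_const_mul' _ _ ENNReal.ofReal_ne_top,
          ← lintegral_const_mul' _ _ ENNReal.ofReal_ne_top]
        exact le_lintegral_add _ _
    _ ≤ ∫⁻ t in Set.Ioo (0 : ℝ) 1, volume {x | ENNReal.ofReal t < k x} :=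
        setLIntegral_mono' measurableSet_Ioo fun t ht =>
          volume_superlevel_add_le ha hb hab hf hg h (hne hf₁ t ht.2) (hne hg₁ t ht.2)
    _ = ∫⁻ x, min (k x) 1 := (lintegral_min_one_eq_lintegral_Ioo_measure_lt volume hk).symm
    _ ≤ ∫⁻ x, k x := lintegral_mono fun x => min_le_left _ _

theorem lintegral_rpow_mul_lintegral_rpow_le_of_iSup_ne_top (ha : 0 < a) (hb : 0 < b)
    (hab : a + b = 1) (hf : Measurable f) (hg : Measurable g) (hk : Measurable k)
    (h : ∀ x y, f x ^ a * g y ^ b ≤ k (a • x + b • y))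
    (hf₁ : ⨆ x, f x ≠ ∞) (hg₁ : ⨆ x, g x ≠ ∞) :
    (∫⁻ x, f x) ^ a * (∫⁻ x, g x) ^ b ≤ ∫⁻ x, k x := by
  set M := ⨆ x, f x
  set N := ⨆ x, g x
  rcases eq_or_ne M 0 with hM | hM
  · simp [ENNReal.iSup_eq_zero.mp hM, ha]
  rcases eq_or_ne N 0 with hN | hN
  · simp [ENNReal.iSup_eq_zero.mp hN, hb]
  have hMa₀ : M ^ a ≠ 0 := by simp [hM, hf₁]
  have hMa : M ^ a ≠ ∞ := ENNReal.rpow_ne_top_of_nonneg ha.le hf₁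
  have hNb₀ : N ^ b ≠ 0 := by simp [hN, hg₁]
  have hNb : N ^ b ≠ ∞ := ENNReal.rpow_ne_top_of_nonneg hb.le hg₁
  have hMN : ∀ p q : ℝ≥0∞, (p / M) ^ a * (q / N) ^ b = p ^ a * q ^ b / (M ^ a * N ^ b) := by
    intro p q
    rw [ENNReal.div_rpow_of_nonneg _ _ ha.le, ENNReal.div_rpow_of_nonneg _ _ hb.le,
      div_eq_mul_inv, div_eq_mul_inv, div_eq_mul_inv, mul_mul_mul_comm,
      ENNReal.mul_inv (.inl hMa₀) (.inl hMa)]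
  have hsup : ∀ {u : ℝ → ℝ≥0∞}, ⨆ x, u x ≠ 0 → ⨆ x, u x ≠ ∞ →
      ⨆ x, u x / ⨆ y, u y = 1 := fun h₀ h₁ => by
    rw [← ENNReal.iSup_div, ENNReal.div_self h₀ h₁]
  have hdiv : ∀ {u : ℝ → ℝ≥0∞} (c : ℝ≥0∞), Measurable u →
      ∫⁻ x, u x / c = (∫⁻ x, u x) / c := fun c hu => by
    simp only [div_eq_mul_inv, lintegral_mul_const _ hu]
  have key := lintegral_add_lintegral_le_of_iSup_eq_one ha hb hab
    (hf.div_const M) (hg.div_const N) (hk.div_const (M ^ a * N ^ b))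
    (fun x y => by rw [hMN]; gcongr; exact h x y) (hsup hM hf₁) (hsup hN hg₁)
  rw [hdiv M hf, hdiv N hg, hdiv _ hk] at key
  have := (ennreal_geom_mean_le_arith_mean2_weighted ha hb hab _ _).trans key
  rwa [hMN, ENNReal.div_le_iff (mul_ne_zero hMa₀ hNb₀) (ENNReal.mul_ne_top hMa hNb),
    ENNReal.div_mul_cancel (mul_ne_zero hMa₀ hNb₀) (ENNReal.mul_ne_top hMa hNb)] at this

end PrekopaLeindlerReal

theorem lintegral_eq_iSup_lintegral_min_natCast {Ω : Type*} [MeasurableSpace Ω] (μ : Measure Ω)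
    {f : Ω → ℝ≥0∞} (hf : Measurable f) : ∫⁻ ω, f ω ∂μ = ⨆ n : ℕ, ∫⁻ ω, min (f ω) n ∂μ := by
  rw [← lintegral_iSup (fun n => by fun_prop) fun m n hmn ω => by dsimp only; gcongr]
  simp only [← inf_iSup_eq, ENNReal.iSup_natCast, inf_top_eq]

theorem isPrekopaLeindler_volume_real : IsPrekopaLeindler (volume : Measure ℝ) := by
  intro a b ha hb hab f g k hf hg hk h
  have hfin : ∀ (u : ℝ → ℝ≥0∞) (n : ℕ), ⨆ x, min (u x) n ≠ ∞ := fun u n =>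
    ne_top_of_le_ne_top (ENNReal.natCast_ne_top n) (iSup_le fun _ => min_le_right _ _)
  have hrpow : ∀ {c : ℝ} (_ : 0 < c) (I : ℕ → ℝ≥0∞), (⨆ n, I n) ^ c = ⨆ n, I n ^ c :=
    fun hc I => (ENNReal.orderIsoRpow _ hc).map_iSup I
  rw [lintegral_eq_iSup_lintegral_min_natCast volume hf,
    lintegral_eq_iSup_lintegral_min_natCast volume hg, hrpow ha, hrpow hb]
  rw [ENNReal.iSup_mul]
  refine iSup_le fun n => ?_
  rw [ENNReal.mul_iSup]
  refine iSup_le fun m => ?_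
  refine lintegral_rpow_mul_lintegral_rpow_le_of_iSup_ne_top ha hb hab (by fun_prop)
    (by fun_prop) hk (fun x y => le_trans ?_ (h x y)) (hfin f n) (hfin g m)
  gcongr <;> exact min_le_left _ _

section PrekopaLeindler

variable {E F : Type*} [AddCommGroup E] [Module ℝ E] [MeasurableSpace E]
  [AddCommGroup F] [Module ℝ F] [MeasurableSpace F]

theorem IsPrekopaLeindler.prod {μ : Measure E} {ν : Measure F} [SFinite ν]
    (hμ : IsPrekopaLeindler μ) (hν : IsPrekopaLeindler ν) : IsPrekopaLeindler (μ.prod ν) := by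
  intro a b ha hb hab f g k hf hg hk h
  rw [lintegral_prod _ hf.aemeasurable, lintegral_prod _ hg.aemeasurable,
    lintegral_prod _ hk.aemeasurable]
  exact hμ ha hb hab hf.lintegral_prod_right' hg.lintegral_prod_right' hk.lintegral_prod_right'
    fun x y => hν ha hb hab (by fun_prop) (by fun_prop) (by fun_prop) fun s t => h (x, s) (y, t)

theorem IsPrekopaLeindler.map {μ : Measure E} (hμ : IsPrekopaLeindler μ) (L : E →ₗ[ℝ] F)
    (hL : Measurable L) : IsPrekopaLeindler (μ.map L) := by
  intro a b ha hb hab f g k hf hg hk h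
  rw [lintegral_map hf hL, lintegral_map hg hL, lintegral_map hk hL]
  refine hμ ha hb hab (hf.comp hL) (hg.comp hL) (hk.comp hL) fun x y => ?_
  rw [map_add, map_smul, map_smul]
  exact h (L x) (L y)

theorem IsPrekopaLeindler.smul {μ : Measure E} (hμ : IsPrekopaLeindler μ) (c : ℝ≥0∞) :
    IsPrekopaLeindler (c • μ) := by
  intro a b ha hb hab f g k hf hg hk h
  simp only [lintegral_smul_measure, smul_eq_mul]
  calc (c * ∫⁻ x, f x ∂μ) ^ a * (c * ∫⁻ x, g x ∂μ) ^ b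
      = c ^ a * c ^ b * ((∫⁻ x, f x ∂μ) ^ a * (∫⁻ x, g x ∂μ) ^ b) := by
        rw [ENNReal.mul_rpow_of_nonneg _ _ ha.le, ENNReal.mul_rpow_of_nonneg _ _ hb.le,
          mul_mul_mul_comm]
    _ = c * ((∫⁻ x, f x ∂μ) ^ a * (∫⁻ x, g x ∂μ) ^ b) := by
        rw [← ENNReal.rpow_add_of_nonneg _ _ ha.le hb.le, hab, ENNReal.rpow_one]
    _ ≤ c * ∫⁻ x, k x ∂μ := by
        gcongr
        exact hμ ha hb hab hf hg hk h

theorem isPrekopaLeindler_dirac [Subsingleton E] (x : E) :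
    IsPrekopaLeindler (Measure.dirac x) := by
  intro a b _ _ _ f g k hf hg hk h
  rw [lintegral_dirac' x hf, lintegral_dirac' x hg, lintegral_dirac' x hk]
  simpa only [Subsingleton.elim (a • x + b • x) x] using h x x

end PrekopaLeindler

theorem isPrekopaLeindler_volume_pi_fin (n : ℕ) :
    IsPrekopaLeindler (volume : Measure (Fin n → ℝ)) := by
  induction n with
  | zero =>
    rw [volume_pi, Measure.pi_of_empty _ default]
    exact isPrekopaLeindler_dirac default
  | succ n ih =>
    let L := (Fin.consLinearEquiv ℝ fun _ : Fin (n + 1) => ℝ).toLinearMap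
    have hL : MeasurePreserving L (volume.prod volume) volume := by
      have hL_eq : ⇑L = (MeasurableEquiv.piFinSuccAbove (fun _ : Fin (n + 1) => ℝ) 0).symm :=
        funext fun x => (Fin.insertNth_zero' x.1 x.2).symm
      exact hL_eq ▸ (volume_preserving_piFinSuccAbove (fun _ : Fin (n + 1) => ℝ) 0).symm
    rw [← hL.map_eq]
    exact (isPrekopaLeindler_volume_real.prod ih).map L hL.measurable

section Haar

variable {E : Type*} [NormedAddCommGroup E] [NormedSpace ℝ E] [FiniteDimensional ℝ E]
  [MeasurableSpace E] [BorelSpace E]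

theorem isPrekopaLeindler_of_isAddHaarMeasure (μ : Measure E) [μ.IsAddHaarMeasure] :
    IsPrekopaLeindler μ := by
  let e := (Module.finBasis ℝ E).equivFunL.symm
  rw [Measure.isAddLeftInvariant_eq_smul μ (volume.map e)]
  exact ((isPrekopaLeindler_volume_pi_fin _).map e.toLinearEquiv.toLinearMap
    e.continuous.measurable).smul _

end Haar

section StronglyConvexPotential

variable {E : Type*} [AddCommGroup E] [Module ℝ E] {Q : LinearMap.BilinForm ℝ E} {H : E → ℝ}

theorem apply_add_bilin_sub_le_of_convexOn_sub_bilin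
    (hH : ConvexOn ℝ Set.univ fun x => H x - Q x x / 2) {a b : ℝ} (ha : 0 ≤ a) (hb : 0 ≤ b)
    (hab : a + b = 1) (x y : E) :
    H (a • x + b • y) + a * b / 2 * Q (x - y) (x - y) ≤ a * H x + b * H y := by
  have hconv := hH.2 (Set.mem_univ x) (Set.mem_univ y) ha hb hab
  obtain rfl : b = 1 - a := by linarith
  simp only [map_add, map_sub, map_smul, LinearMap.add_apply, LinearMap.sub_apply,
    LinearMap.smul_apply, smul_eq_mul] at hconv ⊢
  linear_combination hconv

theorem mul_sub_add_mul_neg_sub_le (hQ : Q.IsPosSemidef)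
    (hH : ConvexOn ℝ Set.univ fun x => H x - Q x x / 2) {a b : ℝ} (ha : 0 ≤ a) (hb : 0 < b)
    (hab : a + b = 1) (u x y : E) :
    a * (Q u x - H x) + b * (-(a / b) * Q u y - H y)
      ≤ a / b * (Q u u / 2) - H (a • x + b • y) := by
  have hconv := apply_add_bilin_sub_le_of_convexOn_sub_bilin hH ha hb.le hab x y
  have hsquare : a * Q u (x - y) ≤ a / b * (Q u u / 2) + a * b / 2 * Q (x - y) (x - y) := by
    have hnonneg := mul_nonneg (div_nonneg ha (by positivity : 0 ≤ 2 * b))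
      (hQ.nonneg (u - b • (x - y)))
    have hsymm := hQ.isSymm.eq u (x - y)
    generalize x - y = d at *
    simp only [map_sub, map_smul, LinearMap.sub_apply, LinearMap.smul_apply, smul_eq_mul,
      ← hsymm] at hnonneg
    calc _ ≤ a * Q u d + a / (2 * b) * (Q u u - b * Q u d - b * (Q u d - b * Q d d)) :=
          le_add_of_nonneg_right hnonneg
      _ = _ := by field_simp; ring
  have hcancel : b * (-(a / b) * Q u y) = -(a * Q u y) := by field_simp
  rw [map_sub] at hsquare
  linarith

variable [MeasurableSpace E] {μ : Measure E} [NeZero μ] {u : E}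

theorem IsPrekopaLeindler.lintegral_exp_rpow_mul_le (hμ : IsPrekopaLeindler μ)
    (hQ : Q.IsPosSemidef) (hQu : Measurable (Q u)) (hHm : Measurable H)
    (hH : ConvexOn ℝ Set.univ fun x => H x - Q x x / 2)
    (hint : Integrable (fun x => exp (-H x)) μ) {a b : ℝ} (ha : 0 < a) (hb : 0 < b)
    (hab : a + b = 1) :
    (∫⁻ x, .ofReal (exp (Q u x)) ∂μ.tilted fun x => -H x) ^ a *
        (∫⁻ x, .ofReal (exp (-(a / b) * Q u x)) ∂μ.tilted fun x => -H x) ^ b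
      ≤ .ofReal (exp (a / b * (Q u u / 2))) := by
  set Z := ∫ x, exp (-H x) ∂μ with hZ_def
  have hZ : 0 < Z := integral_exp_pos hint
  have htilted : ∀ g : E → ℝ, ∫⁻ x, .ofReal (exp (g x)) ∂μ.tilted (fun x => -H x)
      = ∫⁻ x, .ofReal (exp (g x - H x - log Z)) ∂μ := by
    intro g
    rw [lintegral_tilted]
    refine lintegral_congr fun x => ?_
    rw [← hZ_def, ← ENNReal.ofReal_mul (by positivity), exp_sub, exp_log hZ, sub_eq_add_neg,
      exp_add, mul_comm, mul_div_assoc]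
  have hprob : IsProbabilityMeasure (μ.tilted fun x => -H x) := isProbabilityMeasure_tilted hint
  calc _ ≤ ∫⁻ x, .ofReal (exp (a / b * (Q u u / 2) - H x - log Z)) ∂μ := by
        rw [htilted, htilted]
        refine hμ ha hb hab (by fun_prop) (by fun_prop) (by fun_prop) fun x y => ?_
        rw [ENNReal.ofReal_rpow_of_nonneg (exp_nonneg _) ha.le,
          ENNReal.ofReal_rpow_of_nonneg (exp_nonneg _) hb.le,
          ← ENNReal.ofReal_mul (by positivity), ← exp_mul, ← exp_mul, ← exp_add]
        gcongr
        have := mul_sub_add_mul_neg_sub_le hQ hH ha.le hb hab u x y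
        linear_combination this - log Z * hab
    _ = .ofReal (exp (a / b * (Q u u / 2))) := by
        rw [← htilted, lintegral_const, measure_univ, mul_one]

theorem IsPrekopaLeindler.integrable_exp_tilted (hμ : IsPrekopaLeindler μ)
    (hQ : Q.IsPosSemidef) (hQu : Measurable (Q u)) (hHm : Measurable H)
    (hH : ConvexOn ℝ Set.univ fun x => H x - Q x x / 2)
    (hint : Integrable (fun x => exp (-H x)) μ) :
    Integrable (fun x => exp (Q u x)) (μ.tilted fun x => -H x) := by
  have hprob : IsProbabilityMeasure (μ.tilted fun x => -H x) := isProbabilityMeasure_tilted hint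
  have hle := hμ.lintegral_exp_rpow_mul_le hQ hQu hHm hH hint one_half_pos one_half_pos
    (by norm_num)
  have hpos : ∫⁻ x, .ofReal (exp (-(1 / 2 / (1 / 2)) * Q u x)) ∂μ.tilted (fun x => -H x) ≠ 0 := by
    rw [← pos_iff_ne_zero, lintegral_pos_iff_support (by fun_prop)]
    simp [Function.support, exp_pos]
  have hlt := ENNReal.lt_top_of_mul_ne_top_left (ne_top_of_le_ne_top ENNReal.ofReal_ne_top hle)
    ((ENNReal.rpow_eq_zero_iff_of_pos one_half_pos).not.mpr hpos)
  exact ⟨by fun_prop, (hasFiniteIntegral_iff_ofReal (.of_forall fun x => exp_nonneg _)).mpr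
    ((ENNReal.rpow_lt_top_iff_of_pos one_half_pos).mp hlt)⟩

theorem IsPrekopaLeindler.integrable_tilted (hμ : IsPrekopaLeindler μ)
    (hQ : Q.IsPosSemidef) (hQu : Measurable (Q u)) (hHm : Measurable H)
    (hH : ConvexOn ℝ Set.univ fun x => H x - Q x x / 2)
    (hint : Integrable (fun x => exp (-H x)) μ) :
    Integrable (Q u) (μ.tilted fun x => -H x) := by
  have hQnu : Measurable (Q (-u)) := by
    rw [map_neg]
    exact hQu.neg
  have hpos := hμ.integrable_exp_tilted hQ hQu hHm hH hint
  have hneg := hμ.integrable_exp_tilted hQ hQnu hHm hH hint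
  simpa using integrable_pow_of_integrable_exp_mul (X := Q u) one_ne_zero (by simpa using hpos)
    (by simpa using hneg) 1

theorem IsPrekopaLeindler.integral_exp_rpow_mul_le (hμ : IsPrekopaLeindler μ)
    (hQ : Q.IsPosSemidef) (hQm : ∀ v, Measurable (Q v)) (hHm : Measurable H)
    (hH : ConvexOn ℝ Set.univ fun x => H x - Q x x / 2)
    (hint : Integrable (fun x => exp (-H x)) μ) (u : E) {a b : ℝ} (ha : 0 < a) (hb : 0 < b)
    (hab : a + b = 1) :
    (∫ x, exp (Q u x) ∂μ.tilted fun x => -H x) ^ a *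
        (∫ x, exp (-(a / b) * Q u x) ∂μ.tilted fun x => -H x) ^ b
      ≤ exp (a / b * (Q u u / 2)) := by
  have hexp : ∀ v, Integrable (fun x => exp (Q v x)) (μ.tilted fun x => -H x) := fun v =>
    hμ.integrable_exp_tilted hQ (hQm v) hHm hH hint
  have hexp' := hexp (-(a / b) • u)
  simp only [map_smul, LinearMap.smul_apply, smul_eq_mul] at hexp'
  have h := hμ.lintegral_exp_rpow_mul_le hQ (hQm u) hHm hH hint ha hb hab
  rwa [← ofReal_integral_eq_lintegral_ofReal (hexp u) (.of_forall fun x => exp_nonneg _),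
    ← ofReal_integral_eq_lintegral_ofReal hexp' (.of_forall fun x => exp_nonneg _),
    ENNReal.ofReal_rpow_of_nonneg (by positivity) ha.le,
    ENNReal.ofReal_rpow_of_nonneg (by positivity) hb.le,
    ← ENNReal.ofReal_mul (by positivity), ENNReal.ofReal_le_ofReal_iff (exp_nonneg _)] at h

theorem IsPrekopaLeindler.integral_exp_sub_integral_le_exp_div (hμ : IsPrekopaLeindler μ)
    (hQ : Q.IsPosSemidef) (hQm : ∀ v, Measurable (Q v)) (hHm : Measurable H)
    (hH : ConvexOn ℝ Set.univ fun x => H x - Q x x / 2)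
    (hint : Integrable (fun x => exp (-H x)) μ) (u : E) {b : ℝ} (hb : 0 < b) (hb₁ : b < 1) :
    ∫ x, exp (Q u x - ∫ y, Q u y ∂μ.tilted fun x => -H x) ∂μ.tilted (fun x => -H x)
      ≤ exp (Q u u / 2 / b) := by
  set P := μ.tilted fun x => -H x
  set m := ∫ y, Q u y ∂P
  set c := (1 - b) / b
  have hprob : IsProbabilityMeasure P := isProbabilityMeasure_tilted hint
  have ha : 0 < 1 - b := sub_pos.mpr hb₁
  have hjensen : exp (-c * m) ≤ ∫ x, exp (-c * Q u x) ∂P := by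
    rw [← integral_const_mul]
    refine convexOn_exp.map_integral_le continuous_exp.continuousOn isClosed_univ
      (.of_forall fun _ => Set.mem_univ _)
      ((hμ.integrable_tilted hQ (hQm u) hHm hH hint).const_mul _) ?_
    simpa [Function.comp_def] using hμ.integrable_exp_tilted hQ (hQm (-c • u)) hHm hH hint
  rw [← rpow_le_rpow_iff (by positivity) (exp_nonneg _) ha]
  calc (∫ x, exp (Q u x - m) ∂P) ^ (1 - b)
      = (∫ x, exp (Q u x) ∂P) ^ (1 - b) * exp (-c * m) ^ b := by
        simp only [sub_eq_add_neg _ m, exp_add, integral_mul_const]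
        rw [mul_rpow (by positivity) (exp_nonneg _), ← exp_mul, ← exp_mul]
        congr 2
        simp only [c]
        field_simp
    _ ≤ (∫ x, exp (Q u x) ∂P) ^ (1 - b) * (∫ x, exp (-c * Q u x) ∂P) ^ b := by
        gcongr
    _ ≤ exp (c * (Q u u / 2)) :=
        hμ.integral_exp_rpow_mul_le hQ hQm hHm hH hint u ha hb (sub_add_cancel 1 b)
    _ = exp (Q u u / 2 / b) ^ (1 - b) := by
        rw [← exp_mul]
        congr 1
        simp only [c]
        ring

theorem IsPrekopaLeindler.integral_exp_sub_integral_le (hμ : IsPrekopaLeindler μ)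
    (hQ : Q.IsPosSemidef) (hQm : ∀ v, Measurable (Q v)) (hHm : Measurable H)
    (hH : ConvexOn ℝ Set.univ fun x => H x - Q x x / 2)
    (hint : Integrable (fun x => exp (-H x)) μ) (u : E) :
    ∫ x, exp (Q u x - ∫ y, Q u y ∂μ.tilted fun x => -H x) ∂μ.tilted (fun x => -H x)
      ≤ exp (Q u u / 2) := by
  have hlim : Filter.Tendsto (fun b : ℝ => exp (Q u u / 2 / b)) (𝓝[<] 1) (𝓝 (exp (Q u u / 2))) := by
    have : ContinuousAt (fun b : ℝ => exp (Q u u / 2 / b)) 1 := by fun_prop (disch := norm_num)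
    simpa using this.tendsto.mono_left nhdsWithin_le_nhds
  refine ge_of_tendsto hlim ?_
  filter_upwards [Ioo_mem_nhdsLT one_pos] with b hb
  exact hμ.integral_exp_sub_integral_le_exp_div hQ hQm hHm hH hint u hb.1 hb.2

end StronglyConvexPotential

theorem integral_exp_bilin_tilted {E : Type*} [AddCommGroup E] [Module ℝ E] [MeasurableSpace E]
    [MeasurableAdd E] {μ : Measure E} [μ.IsAddRightInvariant] [NeZero μ]
    {Q : LinearMap.BilinForm ℝ E} (hQ : Q.IsSymm)
    (hint : Integrable (fun x => exp (-(Q x x / 2))) μ) (u : E) :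
    ∫ x, exp (Q u x) ∂μ.tilted (fun x => -(Q x x / 2)) = exp (Q u u / 2) := by
  have hsquare : ∀ x, exp (((fun x => -(Q x x / 2)) + fun x => Q u x) x)
      = exp (Q u u / 2) * exp (-(Q (x - u) (x - u) / 2)) := fun x => by
    rw [← exp_add, Pi.add_apply]
    congr 1
    simp only [map_sub, LinearMap.sub_apply, hQ.eq x u]
    ring
  rw [integral_exp_tilted]
  simp only [hsquare]
  rw [integral_const_mul, integral_sub_right_eq_self (fun x => exp (-(Q x x / 2))) u,
    mul_div_cancel_right₀ _ (integral_exp_pos hint).ne']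

section FiniteDimensional

variable {E : Type*} [NormedAddCommGroup E] [NormedSpace ℝ E] [FiniteDimensional ℝ E]
  {Q : LinearMap.BilinForm ℝ E} {H : E → ℝ}

theorem continuous_bilin_self (Q : LinearMap.BilinForm ℝ E) : Continuous fun x => Q x x := by
  have : Continuous fun x => Q.toContinuousBilinearMap x x := by fun_prop
  exact this

theorem continuous_of_convexOn_sub_bilin {c : ℝ}
    (hH : ConvexOn ℝ Set.univ fun x => H x - c * Q x x) : Continuous H := by
  simpa [Pi.add_def] using (continuousOn_univ.mp (hH.continuousOn isOpen_univ)).add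
    ((continuous_bilin_self Q).const_mul c)

end FiniteDimensional

section Haar

variable {E : Type*} [NormedAddCommGroup E] [NormedSpace ℝ E] [MeasurableSpace E] [BorelSpace E]
  {μ : Measure E}

theorem eq_zero_of_integrable_of_forall_add_eq [μ.IsAddRightInvariant] [NeZero μ] {g : E → ℝ}
    (hg : Integrable g μ) (hpos : ∀ x, 0 < g x) {u : E} (hu : ∀ x, g (x + u) = g x) : u = 0 := by
  by_contra hu₀
  -- `arctan ∘ l` is bounded but strictly larger after translation by `u`.
  obtain ⟨l, hl⟩ := SeparatingDual.exists_eq_one (R := ℝ) hu₀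
  have hbdd : ∀ t, |arctan t| ≤ π / 2 := fun t =>
    abs_le.mpr ⟨(neg_pi_div_two_lt_arctan t).le, (arctan_lt_pi_div_two t).le⟩
  have hint : Integrable (fun x => arctan (l x) * g x) μ :=
    hg.bdd_mul (c := π / 2) (by fun_prop) (.of_forall fun x => hbdd _)
  have hint' : Integrable (fun x => arctan (l x + 1) * g x) μ :=
    hg.bdd_mul (c := π / 2) (by fun_prop) (.of_forall fun x => hbdd _)
  have hshift : ∫ x, arctan (l x + 1) * g x ∂μ = ∫ x, arctan (l x) * g x ∂μ := by
    rw [← integral_add_right_eq_self (fun x => arctan (l x) * g x) u]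
    simp only [map_add, hl, hu]
  have hgap : ∀ x, 0 < arctan (l x + 1) * g x - arctan (l x) * g x := fun x =>
    sub_pos.mpr (mul_lt_mul_of_pos_right (arctan_strictMono (lt_add_one _)) (hpos x))
  have : 0 < ∫ x, (arctan (l x + 1) * g x - arctan (l x) * g x) ∂μ :=
    (integral_pos_iff_support_of_nonneg (fun x => (hgap x).le) (hint'.sub hint)).mpr
      (by simp [Function.support, (hgap _).ne', NeZero.pos])
  rw [integral_sub hint' hint, hshift, sub_self] at this
  exact this.false

variable [FiniteDimensional ℝ E] {Q : LinearMap.BilinForm ℝ E} {H : E → ℝ}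

theorem exists_bilin_eq_of_integrable_exp_neg [μ.IsAddRightInvariant] [NeZero μ] (hQ : Q.IsSymm)
    (hint : Integrable (fun x => exp (-(Q x x / 2))) μ) (l : Module.Dual ℝ E) :
    ∃ u, Q u = l := by
  have hinj : Function.Injective Q := by
    refine (injective_iff_map_eq_zero Q).mpr fun u hu => ?_
    refine eq_zero_of_integrable_of_forall_add_eq hint (fun _ => exp_pos _) fun x => ?_
    simp [hQ.eq x u, hu]
  exact (LinearMap.injective_iff_surjective_of_finrank_eq_finrank
    Subspace.dual_finrank_eq.symm).mp hinj l

theorem integral_exp_sub_integral_le_integral_exp_bilin [μ.IsAddHaarMeasure]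
    (hQ : Q.IsPosSemidef) {a : ℝ} (ha : 0 < a)
    (hH : ConvexOn ℝ Set.univ fun x => H x - a / 2 * Q x x)
    (hHint : Integrable (fun x => exp (-H x)) μ)
    (hQint : Integrable (fun x => exp (-(Q x x / 2))) μ) (l : Module.Dual ℝ E) :
    ∫ x, exp (l x - ∫ y, l y ∂μ.tilted fun x => -H x) ∂μ.tilted (fun x => -H x)
      ≤ ∫ x, exp ((√a)⁻¹ * l x) ∂μ.tilted (fun x => -(Q x x / 2)) := by
  obtain ⟨u, rfl⟩ := exists_bilin_eq_of_integrable_exp_neg hQ.isSymm hQint l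
  have hH' : ConvexOn ℝ Set.univ fun x => H x - (a • Q) x x / 2 := by
    simpa [mul_div_right_comm] using hH
  have hgauss := integral_exp_bilin_tilted hQ.isSymm hQint ((√a)⁻¹ • u)
  have hsubgauss := (isPrekopaLeindler_of_isAddHaarMeasure μ).integral_exp_sub_integral_le
    (hQ.smul ha.le) (fun v => (LinearMap.continuous_of_finiteDimensional _).measurable)
    (continuous_of_convexOn_sub_bilin hH).measurable hH' hHint (a⁻¹ • u)
  have hcoef : (√a)⁻¹ * (√a)⁻¹ = a⁻¹ := by rw [← mul_inv, mul_self_sqrt ha.le]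
  simp only [map_smul, LinearMap.smul_apply, smul_eq_mul, ← mul_assoc, hcoef,
    inv_mul_cancel₀ ha.ne', one_mul] at hgauss hsubgauss ⊢
  exact hsubgauss.trans_eq hgauss.symm

end Haar

theorem integrable_and_eq_tilted_of_eq_smul_withDensity {Ω : Type*} [MeasurableSpace Ω]
    {μ P : Measure Ω} {f : Ω → ℝ} (hP : IsProbabilityMeasure P) (hf : Measurable f) {c : ℝ≥0∞}
    (hPf : P = c • μ.withDensity fun x => .ofReal (exp (f x))) :
    Integrable (fun x => exp (f x)) μ ∧ P = μ.tilted f := by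
  have hmass : c * ∫⁻ x, .ofReal (exp (f x)) ∂μ = 1 := by
    simpa [hPf] using hP.measure_univ
  have hc : c ≠ 0 := left_ne_zero_of_mul_eq_one hmass
  have hint : Integrable (fun x => exp (f x)) μ := by
    refine ⟨by fun_prop, (hasFiniteIntegral_iff_ofReal (.of_forall fun x => exp_nonneg _)).mpr ?_⟩
    exact ENNReal.lt_top_of_mul_ne_top_right (hmass ▸ ENNReal.one_ne_top) hc
  refine ⟨hint, ?_⟩
  have hμ : NeZero μ := ⟨by rintro rfl; simp at hmass⟩
  rw [hPf, Measure.tilted, ← withDensity_smul _ (by fun_prop)]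
  congr 1 with x
  rw [ENNReal.ofReal_div_of_pos (integral_exp_pos hint),
    ofReal_integral_eq_lintegral_ofReal hint (.of_forall fun x => exp_nonneg _),
    ENNReal.div_eq_inv_mul, ← ENNReal.eq_inv_of_mul_eq_one_left hmass, Pi.smul_apply, smul_eq_mul]

theorem strongConvexOn_univ_of_le_deriv_deriv {V : ℝ → ℝ} (hV : Differentiable ℝ V)
    (hV' : Differentiable ℝ (deriv V)) {a : ℝ} (ha : ∀ x, a ≤ deriv (deriv V) x) :
    StrongConvexOn Set.univ a V := by
  have hderiv : deriv (fun x => V x - a / 2 * ‖x‖ ^ 2) = fun x => deriv V x - a * x := by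
    funext x
    simp only [norm_eq_abs, sq_abs]
    have := (hV x).hasDerivAt.sub (((hasDerivAt_id x).pow 2).const_mul (a / 2))
    exact (this.congr_deriv (by simp; ring)).deriv
  rw [strongConvexOn_iff_convex]
  refine convexOn_univ_of_deriv2_nonneg ?_ ?_ fun x => ?_
  · simp only [norm_eq_abs, sq_abs]
    fun_prop
  · rw [hderiv]
    fun_prop
  · have := ((hV' x).hasDerivAt.sub ((hasDerivAt_id x).const_mul a)).deriv
    simp only [Function.iterate_succ, Function.iterate_zero, Function.comp_apply, id, hderiv]
    exact (sub_nonneg.mpr (ha x)).trans_eq (this.trans (by simp)).symm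

theorem strongConvexOn_univ_comp_add_const {E : Type*} [NormedAddCommGroup E] [NormedSpace ℝ E]
    {f : E → ℝ} {m : ℝ} (hf : StrongConvexOn Set.univ m f) (c : E) :
    StrongConvexOn Set.univ m fun x => f (x + c) := by
  refine ⟨convex_univ, fun x _ y _ a b ha hb hab => ?_⟩
  have hcombo : a • x + b • y + c = a • (x + c) + b • (y + c) := by
    rw [smul_add, smul_add, add_add_add_comm, ← add_smul, hab, one_smul]
  simpa [hcombo] using hf.2 (Set.mem_univ (x + c)) (Set.mem_univ (y + c)) ha hb hab

theorem convexOn_finset_sum {ι E : Type*} [AddCommGroup E] [Module ℝ E] {s : Set E}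
    (hs : Convex ℝ s) (t : Finset ι) {f : ι → E → ℝ} (hf : ∀ i ∈ t, ConvexOn ℝ s (f i)) :
    ConvexOn ℝ s fun x => ∑ i ∈ t, f i x := by
  simpa only [← Finset.sum_apply] using
    Finset.sum_induction f (ConvexOn ℝ s) (fun _ _ => ConvexOn.add) (convexOn_const 0 hs) hf

section Graph

variable {α : Type*} [DecidableEq α]

/-- The discrete gradient `∇(h ∨ 0)` along the oriented edge `(x, y)`, as a linear functional of
the interior field `h`. -/
def edgeGradient (B : Finset α) (x y : α) : ({x // x ∉ B} → ℝ) →ₗ[ℝ] ℝ where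
  toFun h := gvee B h 0 y - gvee B h 0 x
  map_add' h k := by
    simp only [gvee, Pi.add_apply, Pi.zero_apply]
    split_ifs <;> ring
  map_smul' c h := by
    simp only [gvee, Pi.smul_apply, Pi.zero_apply, smul_eq_mul, RingHom.id_apply]
    split_ifs <;> ring

theorem gvee_sub_gvee (B : Finset α) (h : {x // x ∉ B} → ℝ) (ψ : α → ℝ) (x y : α) :
    gvee B h ψ y - gvee B h ψ x = edgeGradient B x y h + (gvee B 0 ψ y - gvee B 0 ψ x) := by
  simp only [edgeGradient, gvee, LinearMap.coe_mk, AddHom.coe_mk, Pi.zero_apply]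
  split_ifs <;> ring

variable [Fintype α] (G : SimpleGraph α) [DecidableRel G.Adj] (B : Finset α)

/-- The Dirichlet form `∑_{b ∈ E} ∇(h ∨ 0)(b) ∇(k ∨ 0)(b)` with zero boundary values. The sum runs
over oriented edges, whence the factor `1 / 2`. -/
def dirichletForm : LinearMap.BilinForm ℝ ({x // x ∉ B} → ℝ) :=
  (1 / 2 : ℝ) • ∑ x, ∑ y, if G.Adj x y then
    (LinearMap.mul ℝ ℝ).compl₁₂ (edgeGradient B x y) (edgeGradient B x y) else 0

theorem dirichletForm_apply (h k : {x // x ∉ B} → ℝ) :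
    dirichletForm G B h k = 1 / 2 * ∑ x, ∑ y,
      if G.Adj x y then edgeGradient B x y h * edgeGradient B x y k else 0 := by
  simp only [dirichletForm, LinearMap.smul_apply, LinearMap.sum_apply, smul_eq_mul]
  congr! 5
  split_ifs <;> rfl

theorem isPosSemidef_dirichletForm : (dirichletForm G B).IsPosSemidef where
  eq h k := by simp only [dirichletForm_apply, mul_comm]
  nonneg h := by
    rw [dirichletForm_apply]
    refine mul_nonneg (by norm_num) (Finset.sum_nonneg fun x _ => Finset.sum_nonneg fun y _ => ?_)
    split_ifs
    exacts [mul_self_nonneg _, le_rfl]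

theorem graphDGFFEnergy_one_zero (h : {x // x ∉ B} → ℝ) :
    graphDGFFEnergy G B (fun _ _ => 1) (fun _ => 0) h = dirichletForm G B h h / 2 := by
  simp only [graphDGFFEnergy, dirichletForm_apply, one_mul, sq]
  change 1 / 4 * (∑ x, ∑ y,
    if G.Adj x y then edgeGradient B x y h * edgeGradient B x y h else 0) = _
  ring

theorem convexOn_graphGLEnergy_sub_dirichletForm {V : ℝ → ℝ} {a : ℝ}
    (hV : StrongConvexOn Set.univ a V) (ψ : α → ℝ) :
    ConvexOn ℝ Set.univ fun h => graphGLEnergy V G B ψ h - a / 2 * dirichletForm G B h h := by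
  have hedge : ∀ x y, ConvexOn ℝ Set.univ fun h => if G.Adj x y then
      V (gvee B h ψ y - gvee B h ψ x) - a / 2 * edgeGradient B x y h ^ 2 else 0 := fun x y => by
    split_ifs
    · have hshift := strongConvexOn_univ_comp_add_const hV (gvee B 0 ψ y - gvee B 0 ψ x)
      have := (strongConvexOn_iff_convex.mp hshift).comp_linearMap (edgeGradient B x y)
      simpa [Function.comp_def, ← gvee_sub_gvee] using this
    · exact convexOn_const 0 convex_univ
  have hsum := (convexOn_finset_sum convex_univ Finset.univ fun x _ =>
    convexOn_finset_sum convex_univ Finset.univ fun y _ => hedge x y).smul one_half_pos.le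
  refine hsum.congr fun h _ => ?_
  simp only [graphGLEnergy, dirichletForm_apply, smul_eq_mul]
  rw [mul_left_comm, ← mul_sub]
  simp only [Finset.mul_sum, ← Finset.sum_sub_distrib]
  refine Finset.sum_congr rfl fun x _ => Finset.sum_congr rfl fun y _ => ?_
  split_ifs <;> ring

end Graph

theorem brascamp_lieb_exponential_general {a : ℝ} (ha : 0 < a) {V : ℝ → ℝ}
    (hV : StrongConvexOn Set.univ a V) {α : Type*} [Fintype α] [DecidableEq α]
    {G : SimpleGraph α} [DecidableRel G.Adj] {B : Finset α} {ψ : α → ℝ} (ν : {x // x ∉ B} → ℝ)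
    {P Pstar : Measure ({x // x ∉ B} → ℝ)} (hP : IsGraphGL V G B ψ P)
    (hPstar : IsGraphDGFF G B (fun _ _ => 1) (fun _ => 0) Pstar) :
    (∫ h, Real.exp ((∑ x, ν x * h x) - ∫ h', ∑ x, ν x * h' x ∂P) ∂P)
      ≤ ∫ h, Real.exp ((√a)⁻¹ * ∑ x, ν x * h x) ∂Pstar := by
  have hconv := convexOn_graphGLEnergy_sub_dirichletForm G B hV ψ
  have hH : Measurable (graphGLEnergy V G B ψ) :=
    (continuous_of_convexOn_sub_bilin hconv).measurable
  have hD : Measurable fun h => -(dirichletForm G B h h / 2) :=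
    ((continuous_bilin_self _).div_const 2).neg.measurable
  obtain ⟨hprob, c, -, -, hPc⟩ := hP
  obtain ⟨hprob', c', -, -, hPc'⟩ := hPstar
  simp only [graphDGFFEnergy_one_zero] at hPc'
  obtain ⟨hint, rfl⟩ := integrable_and_eq_tilted_of_eq_smul_withDensity hprob hH.neg hPc
  obtain ⟨hint', rfl⟩ := integrable_and_eq_tilted_of_eq_smul_withDensity hprob' hD hPc'
  exact integral_exp_sub_integral_le_integral_exp_bilin (isPosSemidef_dirichletForm G B) ha
    hconv hint hint' (dotProductBilin ℝ ℝ ν)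

/-- Brascamp–Lieb exponential moment inequality.
There is `C > 0` depending only on `a_V, A_V` such that for every finite connected graph
`G = (V ∪ ∂V, E)` with `∂V ≠ ∅`, every boundary condition `ψ` and every `ν ∈ ℝ^V`,
`E_{P^ψ}[exp(⟨ν,h⟩ − E⟨ν,h⟩)] ≤ E[exp(C⟨ν,h*⟩)]`, where `h*` is the zero-boundary
unit-weight DGFF. -/
theorem brascamp_lieb_exponential (aV AV : ℝ) (haV : 0 < aV) :
    ∃ C : ℝ, 0 < C ∧
      ∀ (V : ℝ → ℝ), ContDiff ℝ 2 V → (∀ x, V (-x) = V x) →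
        (∀ x, aV ≤ deriv (deriv V) x) → (∀ x, deriv (deriv V) x ≤ AV) →
      ∀ (α : Type) [Fintype α] [DecidableEq α] (G : SimpleGraph α) [DecidableRel G.Adj],
        G.Connected →
      ∀ (B : Finset α), B.Nonempty →
      ∀ (ψ : α → ℝ) (ν : {x // x ∉ B} → ℝ) (P Pstar : Measure ({x // x ∉ B} → ℝ)),
        IsGraphGL V G B ψ P →
        IsGraphDGFF G B (fun _ _ => 1) (fun _ => 0) Pstar →
        (∫ h, Real.exp ((∑ x, ν x * h x) - ∫ h', ∑ x, ν x * h' x ∂P) ∂P)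
          ≤ ∫ h, Real.exp (C * ∑ x, ν x * h x) ∂Pstar := by
  refine ⟨(√aV)⁻¹, by positivity, fun V hV _ hconv _ α _ _ G _ _ B _ ψ ν P Pstar hP hPstar => ?_⟩
  exact brascamp_lieb_exponential_general haV (strongConvexOn_univ_of_le_deriv_deriv
    (hV.differentiable two_ne_zero) hV.differentiable_deriv_two hconv) ν hP hPstar

end
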